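/- arXiv:2512.20079 — 13 statements merged into one kernel-verified Lean document; each statement's English description precedes it below -/
import Mathlib

section
/- Let p be a polynomial over ℂ of degree at least 2, let T(z) = αz + β with α, β ∈ ℂ, α ≠ 0, let λ ∈ ℂ, λ ≠ 0, and set g = λ·(p ∘ T). Then for every z ∈ ℂ with p′(T(z)) ≠ 0, one has T(C_g(z)) = C_p(T(z)) (the Scaling property of Chebyshev's method). -/
open Polynomial

/-- Chebyshev's method applied to a polynomial `p` over `ℂ`:
`C_p(z) = z - (1 + L_p(z)/2) * p(z)/p'(z)` where `L_p(z) = p(z) p''(z) / (p'(z))^2`. -/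
noncomputable def cheb (p : Polynomial ℂ) (z : ℂ) : ℂ :=
  z - (1 + (p.eval z * (derivative (derivative p)).eval z) / ((derivative p).eval z) ^ 2 / 2)
      * (p.eval z / (derivative p).eval z)

/-- Scaling property of Chebyshev's method: if `g = λ • (p ∘ T)` for an affine map
`T(z) = αz + β` with `α ≠ 0` and `λ ≠ 0`, then `T(C_g(z)) = C_p(T(z))` wherever
`p'(T(z)) ≠ 0`. -/
theorem chebyshev_scaling_property (p : Polynomial ℂ) (hp : 2 ≤ p.natDegree)
    (α β lam : ℂ) (hα : α ≠ 0) (hlam : lam ≠ 0)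
    (T : ℂ → ℂ) (hT : ∀ z : ℂ, T z = α * z + β)
    (g : Polynomial ℂ)
    (hg : g = Polynomial.C lam * p.comp (Polynomial.C α * Polynomial.X + Polynomial.C β))
    (z : ℂ) (hz : (derivative p).eval (T z) ≠ 0) :
    T (cheb g z) = cheb p (T z) := by
  have eval_g : g.eval z = lam * p.eval (T z) := by
    simp [hg, hT]
  have eval_g' : (derivative g).eval z = lam * α * (derivative p).eval (T z) := by
    simp [hg, hT, derivative_comp]
    ring
  have eval_g'' : (derivative (derivative g)).eval z =
      lam * α ^ 2 * (derivative (derivative p)).eval (T z) := by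
    simp [hg, hT, derivative_comp]
    ring
  rw [hT (cheb g z), cheb, cheb, eval_g, eval_g', eval_g'']
  have hTz : α * z = T z - β := by rw [hT]; ring
  field_simp
  linear_combination
    (2 * (derivative p).eval (T z) ^ 3) * hTz
end

section
/- Fix integers k, m ≥ 1 and let p(z) = z^k·(z − 1)^m. For every z ∈ ℂ with z ≠ 0, z ≠ 1 and (k+m)z ≠ k, Chebyshev's method satisfies C_p(z) = z − z(z−1)·((k+m)(3k+3m−1)z² − 2k(3k+3m−1)z + 3k² − k)/(2((k+m)z − k)³). -/
open Polynomial

/-- The first-order linear differential equation satisfied by `X ^ k * (X - 1) ^ m`. -/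
theorem X_mul_X_sub_one_mul_derivative (k m : ℕ) (hk : 1 ≤ k) (hm : 1 ≤ m) :
    (X * (X - 1) : ℂ[X]) * derivative (X ^ k * (X - 1) ^ m) =
      (C ((k : ℂ) + m) * X - C (k : ℂ)) * (X ^ k * (X - 1) ^ m) := by
  obtain ⟨a, rfl⟩ := Nat.exists_eq_add_of_le' hk
  obtain ⟨b, rfl⟩ := Nat.exists_eq_add_of_le' hm
  simp only [derivative_mul, derivative_pow, derivative_X, derivative_sub, derivative_one,
    Nat.add_sub_cancel, C_add, map_natCast]
  push_cast
  ring

/-- For `p(z) = z^k (z-1)^m` with `k, m ≥ 1`, at every `z` with `z ≠ 0`, `z ≠ 1` and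
`(k+m)z ≠ k`, Chebyshev's method is given by the explicit rational formula. -/
theorem chebyshev_explicit_formula (k m : ℕ) (hk : 1 ≤ k) (hm : 1 ≤ m)
    (p : Polynomial ℂ) (hp : p = Polynomial.X ^ k * (Polynomial.X - 1) ^ m)
    (z : ℂ) (hz0 : z ≠ 0) (hz1 : z ≠ 1) (hzpole : ((k : ℂ) + m) * z ≠ k) :
    cheb p z = z - z * (z - 1) *
      (((k : ℂ) + m) * (3 * k + 3 * m - 1) * z ^ 2 - 2 * k * (3 * k + 3 * m - 1) * z
        + 3 * (k : ℂ) ^ 2 - k) / (2 * (((k : ℂ) + m) * z - k) ^ 3) := by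
  have hode : X * (X - 1) * derivative p = (C ((k : ℂ) + m) * X - C (k : ℂ)) * p := by
    rw [hp]
    exact X_mul_X_sub_one_mul_derivative k m hk hm
  have hode' := congrArg (fun q => eval z (derivative q)) hode
  replace hode := congrArg (eval z) hode
  simp only [derivative_mul, derivative_X, derivative_sub, derivative_one, derivative_C,
    eval_mul, eval_add, eval_sub, eval_X, eval_one, eval_C, eval_zero] at hode hode'
  have hp0 : p.eval z ≠ 0 := by
    simp [hp, hz0, sub_ne_zero.mpr hz1]
  have hz1' : z - 1 ≠ 0 := sub_ne_zero.mpr hz1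
  have hD : ((k : ℂ) + m) * z - k ≠ 0 := sub_ne_zero.mpr hzpole
  have h1 : (derivative p).eval z =
      (((k : ℂ) + m) * z - k) * p.eval z / (z * (z - 1)) := by
    rw [eq_div_iff (mul_ne_zero hz0 hz1')]
    linear_combination hode
  have h2 : (derivative (derivative p)).eval z =
      (((k : ℂ) + m) * p.eval z + (((k : ℂ) + m) * z - k - (2 * z - 1)) *
        (derivative p).eval z) / (z * (z - 1)) := by
    rw [eq_div_iff (mul_ne_zero hz0 hz1')]
    linear_combination hode'
  rw [cheb, h2, h1]
  generalize p.eval z = P at hp0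
  obtain ⟨D, hDdef⟩ : ∃ D, D = ((k : ℂ) + m) * z - k := ⟨_, rfl⟩
  rw [← hDdef] at hD ⊢
  field_simp
  rw [hDdef]
  ring
end

section
/- Fix integers k, m ≥ 1. The real map C has strictly positive derivative at every point of (−∞, 0) ∪ (1, ∞); in particular C has no critical point in (−∞, 0) ∪ (1, ∞). -/
/-- The numerator of the derivative of Chebyshev's method for `z ^ k * (z - 1) ^ m` at `-t`, where
`n = k + m`, is positive for `t > 0`. -/
theorem chebyshev_deriv_numerator_pos {k n t : ℝ} (hk : 1 ≤ k) (hn : 2 ≤ n) (ht : 0 < t) :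
    0 < 3 * (n * (n - 1) * t ^ 2 + 2 * k * (n - 1) * t + k * (k - 1)) ^ 2
      - (n * t + k) * (n * (n - 1) * (n - 2) * t ^ 3 + 3 * k * (n - 1) * (n - 2) * t ^ 2
        + 3 * k * (k - 1) * (n - 2) * t + k * (k - 1) * (k - 2)) := by
  obtain ⟨a, ha, rfl⟩ : ∃ a : ℝ, 0 ≤ a ∧ k = a + 1 := ⟨k - 1, by linarith, by ring⟩
  obtain ⟨b, hb, rfl⟩ : ∃ b : ℝ, 0 ≤ b ∧ n = b + 2 := ⟨n - 2, by linarith, by ring⟩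
  have key : 0 < (b + 2) ^ 2 * (b + 1) * (2 * b + 3) * t ^ 4
      + (b + 2) * (a + 1) * (b + 1) * (8 * b + 12) * t ^ 3
      + (3 * (a + 1) ^ 2 * (b + 1) * (3 * b + 4) + 3 * (b + 2) ^ 2 * (a + 1) * a) * t ^ 2
      + (a + 1) * a * (8 * (a + 1) * b + 10 * (a + 1) + 2 * (b + 2)) * t
      + (a + 1) ^ 2 * a * (2 * a + 1) := by positivity
  linarith

/-- The derivative of Chebyshev's method for `z ^ k * (z - 1) ^ m`, where `n = k + m`. -/
theorem hasDerivAt_chebyshev {k n x : ℝ} (hx : n * x - k ≠ 0) :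
    HasDerivAt (fun x : ℝ => x - x * (x - 1) *
        (n * (3 * n - 1) * x ^ 2 - 2 * k * (3 * n - 1) * x + (3 * k ^ 2 - k))
          / (2 * (n * x - k) ^ 3))
      ((3 * (n * (n - 1) * x ^ 2 - 2 * k * (n - 1) * x + k * (k - 1)) ^ 2
        - (n * x - k) * (n * (n - 1) * (n - 2) * x ^ 3 - 3 * k * (n - 1) * (n - 2) * x ^ 2
          + 3 * k * (k - 1) * (n - 2) * x - k * (k - 1) * (k - 2))) / (2 * (n * x - k) ^ 4)) x := by
  have hid := hasDerivAt_id' x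
  have hE := (((hid.pow 2).const_mul (n * (3 * n - 1))).sub
    (hid.const_mul (2 * k * (3 * n - 1)))).add_const (3 * k ^ 2 - k)
  have hD := (((hid.const_mul n).sub_const k).pow 3).const_mul 2
  have hN := (hid.mul (hid.sub_const 1)).mul hE
  refine (hid.sub (hN.div hD (by simpa using hx))).congr_deriv ?_
  obtain ⟨A, rfl⟩ : ∃ A, k = n * x - A := ⟨n * x - k, by ring⟩
  simp only [Pi.pow_apply, Pi.mul_apply, Pi.sub_apply, sub_sub_cancel] at hx ⊢
  field_simp
  ring

/-- For `k, m ≥ 1`, the real Chebyshev map `C` for `p(z) = z^k(z-1)^m` has strictly positive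
derivative at every point of `(-∞, 0) ∪ (1, ∞)`; in particular it has no critical point
there. -/
theorem chebyshev_no_real_critical_points (k m : ℕ) (hk : 1 ≤ k) (hm : 1 ≤ m)
    (C : ℝ → ℝ)
    (hC : ∀ x : ℝ, x ≠ (k : ℝ) / ((k : ℝ) + m) →
      C x = x - x * (x - 1) *
        (((k : ℝ) + m) * (3 * k + 3 * m - 1) * x ^ 2 - 2 * k * (3 * k + 3 * m - 1) * x
          + (3 * (k : ℝ) ^ 2 - k)) / (2 * (((k : ℝ) + m) * x - k) ^ 3)) :
    ∀ x : ℝ, x < 0 ∨ 1 < x → 0 < deriv C x ∧ deriv C x ≠ 0 := by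
  intro x hx
  have hk' : (1 : ℝ) ≤ k := by exact_mod_cast hk
  have hm' : (1 : ℝ) ≤ m := by exact_mod_cast hm
  have hA : ((k : ℝ) + m) * x - k ≠ 0 := by
    rcases hx with hx | hx
    · exact ne_of_lt (by nlinarith)
    · exact ne_of_gt (by nlinarith)
  have hxξ : x ≠ (k : ℝ) / ((k : ℝ) + m) := by
    rintro rfl
    exact hA (by field_simp; ring)
  have hderiv := (hasDerivAt_chebyshev hA).congr_of_eventuallyEq (f₁ := C) <| by
    filter_upwards [isOpen_ne.mem_nhds hxξ] with y hy
    rw [hC y hy]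
    ring
  suffices h : 0 < deriv C x from ⟨h, h.ne'⟩
  rw [hderiv.deriv]
  refine div_pos ?_ (by positivity)
  rcases hx with hx | hx
  · have h := chebyshev_deriv_numerator_pos (n := (k : ℝ) + m) hk' (by linarith) (neg_pos.2 hx)
    linarith
  · have h := chebyshev_deriv_numerator_pos (n := (k : ℝ) + m) hm' (by linarith) (sub_pos.2 hx)
    linarith
end

section
/- Fix integers k, m ≥ 1 and set e₁ = k/(k+m) − √(km(3k+3m−1))/((k+m)(3k+3m−1)) and e₂ = k/(k+m) + √(km(3k+3m−1))/((k+m)(3k+3m−1)). Then E(e₁) = E(e₂) = 0, C(e₁) = e₁, C(e₂) = e₂, and 0 < e₁ < k/(k+m) < e₂ < 1; i.e. both extraneous fixed points of C are real, distinct, lie in (0,1), and lie on opposite sides of and equidistant from the pole ξ = k/(k+m). -/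
/-- For `k, m ≥ 1`, the two extraneous fixed points
`e₁ = k/(k+m) - √(km(3k+3m-1))/((k+m)(3k+3m-1))` and
`e₂ = k/(k+m) + √(km(3k+3m-1))/((k+m)(3k+3m-1))` of the Chebyshev map `C` for
`z^k(z-1)^m` are roots of `E`, fixed points of `C`, satisfy
`0 < e₁ < k/(k+m) < e₂ < 1`, and are equidistant from the pole `ξ = k/(k+m)`. -/
theorem extraneous_fixed_points (k m : ℕ) (hk : 1 ≤ k) (hm : 1 ≤ m)
    (E : ℝ → ℝ)
    (hE : ∀ x : ℝ, E x = ((k : ℝ) + m) * (3 * k + 3 * m - 1) * x ^ 2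
      - 2 * k * (3 * k + 3 * m - 1) * x + (3 * (k : ℝ) ^ 2 - k))
    (C : ℝ → ℝ)
    (hC : ∀ x : ℝ, x ≠ (k : ℝ) / ((k : ℝ) + m) →
      C x = x - x * (x - 1) * E x / (2 * (((k : ℝ) + m) * x - k) ^ 3))
    (e₁ e₂ : ℝ)
    (he₁ : e₁ = (k : ℝ) / ((k : ℝ) + m)
      - Real.sqrt ((k : ℝ) * m * (3 * k + 3 * m - 1)) / (((k : ℝ) + m) * (3 * k + 3 * m - 1)))
    (he₂ : e₂ = (k : ℝ) / ((k : ℝ) + m)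
      + Real.sqrt ((k : ℝ) * m * (3 * k + 3 * m - 1)) / (((k : ℝ) + m) * (3 * k + 3 * m - 1))) :
    E e₁ = 0 ∧ E e₂ = 0 ∧ C e₁ = e₁ ∧ C e₂ = e₂ ∧
      0 < e₁ ∧ e₁ < (k : ℝ) / ((k : ℝ) + m) ∧ (k : ℝ) / ((k : ℝ) + m) < e₂ ∧ e₂ < 1 ∧
      (k : ℝ) / ((k : ℝ) + m) - e₁ = e₂ - (k : ℝ) / ((k : ℝ) + m) := by
  have hk' : (1 : ℝ) ≤ k := by exact_mod_cast hk
  have hm' : (1 : ℝ) ≤ m := by exact_mod_cast hm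
  generalize (k : ℝ) = a at *
  generalize (m : ℝ) = b at *
  have hn : 0 < a + b := by linarith
  have hD : 0 < 3 * a + 3 * b - 1 := by linarith
  have hprod : 0 < a * b * (3 * a + 3 * b - 1) := by positivity
  have hs : 0 < √(a * b * (3 * a + 3 * b - 1)) := Real.sqrt_pos.2 hprod
  have hs2 := Real.sq_sqrt hprod.le
  generalize √(a * b * (3 * a + 3 * b - 1)) = s at *
  have hd : 0 < s / ((a + b) * (3 * a + 3 * b - 1)) := by positivity
  have hsa : s < a * (3 * a + 3 * b - 1) := by
    refine lt_of_pow_lt_pow_left₀ 2 (by positivity) ?_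
    have h : b < a * (3 * a + 3 * b - 1) := by nlinarith
    nlinarith [mul_lt_mul_of_pos_left h (show 0 < a * (3 * a + 3 * b - 1) by positivity)]
  have hsb : s < b * (3 * a + 3 * b - 1) := by
    refine lt_of_pow_lt_pow_left₀ 2 (by positivity) ?_
    have h : a < b * (3 * a + 3 * b - 1) := by nlinarith
    nlinarith [mul_lt_mul_of_pos_left h (show 0 < b * (3 * a + 3 * b - 1) by positivity)]
  have hda : s / ((a + b) * (3 * a + 3 * b - 1)) < a / (a + b) := by
    rw [div_lt_div_iff₀ (by positivity) hn]
    nlinarith [mul_lt_mul_of_pos_right hsa hn]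
  have hdb : s / ((a + b) * (3 * a + 3 * b - 1)) < 1 - a / (a + b) := by
    rw [one_sub_div hn.ne', add_sub_cancel_left, div_lt_div_iff₀ (by positivity) hn]
    nlinarith [mul_lt_mul_of_pos_right hsb hn]
  have hd2 : (s / ((a + b) * (3 * a + 3 * b - 1))) ^ 2 * ((a + b) ^ 2 * (3 * a + 3 * b - 1))
      = a * b := by
    rw [div_pow, hs2, div_mul_eq_mul_div, div_eq_iff (by positivity)]
    ring
  have hroot : ∀ t : ℝ, t ^ 2 * ((a + b) ^ 2 * (3 * a + 3 * b - 1)) = a * b →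
      E (a / (a + b) + t) = 0 := by
    intro t ht
    have hξ : (a + b) * (a / (a + b)) = a := mul_div_cancel₀ a hn.ne'
    rw [hE]
    generalize a / (a + b) = x at *
    refine (mul_eq_zero.1 (?_ : (a + b) * _ = 0)).resolve_left hn.ne'
    linear_combination ht + (3 * a + 3 * b - 1) * ((a + b) * x - a + 2 * (a + b) * t) * hξ
  have hfix : ∀ x, x ≠ a / (a + b) → E x = 0 → C x = x := by
    intro x hx h0
    simp [hC x hx, h0]
  generalize s / ((a + b) * (3 * a + 3 * b - 1)) = d at *
  have h₁ : E e₁ = 0 := by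
    rw [he₁, sub_eq_add_neg]
    exact hroot (-d) (by rwa [neg_sq])
  have h₂ : E e₂ = 0 := he₂ ▸ hroot d hd2
  refine ⟨h₁, h₂, hfix e₁ ?_ h₁, hfix e₂ ?_ h₂, ?_, ?_, ?_, ?_, ?_⟩
  · exact (by linarith : e₁ < a / (a + b)).ne
  · exact (by linarith : a / (a + b) < e₂).ne'
  all_goals linarith
end

section
/- Fix integers k, m ≥ 1 and let e₁ = k/(k+m) − √(km(3k+3m−1))/((k+m)(3k+3m−1)) and e₂ = k/(k+m) + √(km(3k+3m−1))/((k+m)(3k+3m−1)) be the two extraneous fixed points of C. Then C′(e₁) > 1 and C′(e₂) > 1; i.e. both extraneous fixed points are repelling. -/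
/-- A root of the quadratic factor `E` of the Chebyshev map other than its vertex is a fixed point
of multiplier greater than `1`. -/
theorem one_lt_deriv_of_root (a b : ℝ) (ha : 1 ≤ a) (hb : 1 ≤ b) (C : ℝ → ℝ)
    (hC : ∀ x : ℝ, x ≠ a / (a + b) →
      C x = x - x * (x - 1) *
        ((a + b) * (3 * a + 3 * b - 1) * x ^ 2 - 2 * a * (3 * a + 3 * b - 1) * x
          + (3 * a ^ 2 - a)) / (2 * ((a + b) * x - a) ^ 3))
    (e : ℝ) (he : e ≠ a / (a + b))
    (hE : (a + b) * (3 * a + 3 * b - 1) * e ^ 2 - 2 * a * (3 * a + 3 * b - 1) * e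
      + (3 * a ^ 2 - a) = 0) :
    1 < deriv C e := by
  have hn : 0 < a + b := by linarith
  have ht : 0 < 3 * a + 3 * b - 1 := by linarith
  have hd : (a + b) * e - a ≠ 0 := fun h => he (by field_simp; linarith)
  have h0 : 0 < e := by
    by_contra! h
    have h₁ : 0 ≤ (a + b) * (3 * a + 3 * b - 1) * e ^ 2 := by positivity
    have h₂ : 0 ≤ 2 * a * (3 * a + 3 * b - 1) * -e :=
      mul_nonneg (by positivity) (by linarith)
    nlinarith
  have h1 : e < 1 := by
    by_contra! h
    have h₁ : 0 ≤ (a + b) * (3 * a + 3 * b - 1) * (e - 1) ^ 2 := by positivity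
    have h₂ : 0 ≤ 2 * b * (3 * a + 3 * b - 1) * (e - 1) :=
      mul_nonneg (by positivity) (by linarith)
    nlinarith
  have hx := hasDerivAt_id' e
  have hquad := ((((hx.pow 2).const_mul ((a + b) * (3 * a + 3 * b - 1))).sub
    (hx.const_mul (2 * a * (3 * a + 3 * b - 1)))).add_const (3 * a ^ 2 - a)).congr_deriv
    (show _ = 2 * (3 * a + 3 * b - 1) * ((a + b) * e - a) by push_cast; ring)
  have hden := (((hx.const_mul (a + b)).sub_const a).pow 3).const_mul 2
  have hmap := hx.sub (((hx.mul (hx.sub_const 1)).mul hquad).div hden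
    (mul_ne_zero two_ne_zero (pow_ne_zero 3 hd)))
  have heq : C =ᶠ[nhds e] _ := (eventually_ne_nhds he).mono hC
  have hderiv : HasDerivAt C
      (1 + e * (1 - e) * (3 * a + 3 * b - 1) / ((a + b) * e - a) ^ 2) e := by
    refine HasDerivAt.congr_of_eventuallyEq (hmap.congr_deriv ?_) heq
    simp only [Pi.mul_apply, Pi.sub_apply, Pi.pow_apply, hE]
    generalize (a + b) * e - a = d at hd
    field_simp
    ring
  rw [hderiv.deriv]
  have : 0 < e * (1 - e) * (3 * a + 3 * b - 1) / ((a + b) * e - a) ^ 2 :=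
    div_pos (mul_pos (mul_pos h0 (by linarith)) ht) (by positivity)
  linarith

/-- For `k, m ≥ 1`, both extraneous fixed points `e₁`, `e₂` of the Chebyshev map `C` for
`z^k(z-1)^m` are repelling: `C'(e₁) > 1` and `C'(e₂) > 1`. -/
theorem extraneous_fixed_points_repelling (k m : ℕ) (hk : 1 ≤ k) (hm : 1 ≤ m)
    (C : ℝ → ℝ)
    (hC : ∀ x : ℝ, x ≠ (k : ℝ) / ((k : ℝ) + m) →
      C x = x - x * (x - 1) *
        (((k : ℝ) + m) * (3 * k + 3 * m - 1) * x ^ 2 - 2 * k * (3 * k + 3 * m - 1) * x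
          + (3 * (k : ℝ) ^ 2 - k)) / (2 * (((k : ℝ) + m) * x - k) ^ 3))
    (e₁ e₂ : ℝ)
    (he₁ : e₁ = (k : ℝ) / ((k : ℝ) + m)
      - Real.sqrt ((k : ℝ) * m * (3 * k + 3 * m - 1)) / (((k : ℝ) + m) * (3 * k + 3 * m - 1)))
    (he₂ : e₂ = (k : ℝ) / ((k : ℝ) + m)
      + Real.sqrt ((k : ℝ) * m * (3 * k + 3 * m - 1)) / (((k : ℝ) + m) * (3 * k + 3 * m - 1))) :
    1 < deriv C e₁ ∧ 1 < deriv C e₂ := by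
  have ha : (1 : ℝ) ≤ k := by exact_mod_cast hk
  have hb : (1 : ℝ) ≤ m := by exact_mod_cast hm
  have hn : (0 : ℝ) < k + m := by linarith
  have ht : (0 : ℝ) < 3 * k + 3 * m - 1 := by linarith
  have hpos : (0 : ℝ) < k * m * (3 * k + 3 * m - 1) := by positivity
  have hs := Real.sqrt_pos.mpr hpos
  have hsq := Real.sq_sqrt hpos.le
  have hq := div_pos hs (mul_pos hn ht)
  have hq_sq : (√((k : ℝ) * m * (3 * k + 3 * m - 1)) / ((k + m) * (3 * k + 3 * m - 1))) ^ 2 *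
      ((k + m) ^ 2 * (3 * k + 3 * m - 1)) = k * m := by
    rw [div_pow, hsq]
    generalize (3 * k + 3 * m - 1 : ℝ) = t at ht
    field_simp
  generalize √((k : ℝ) * m * (3 * k + 3 * m - 1)) / ((k + m) * (3 * k + 3 * m - 1)) = q at *
  have hroot : ∀ d : ℝ, d ^ 2 * ((k + m) ^ 2 * (3 * k + 3 * m - 1)) = k * m →
      ((k : ℝ) + m) * (3 * k + 3 * m - 1) * (k / (k + m) + d) ^ 2
        - 2 * k * (3 * k + 3 * m - 1) * (k / (k + m) + d) + (3 * (k : ℝ) ^ 2 - k) = 0 := by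
    intro d h
    field_simp
    linear_combination h
  constructor
  · refine one_lt_deriv_of_root k m ha hb C hC e₁ (by rw [he₁]; linarith) ?_
    rw [he₁, sub_eq_add_neg]
    exact hroot (-q) (by rwa [neg_sq])
  · refine one_lt_deriv_of_root k m ha hb C hC e₂ (by rw [he₂]; linarith) ?_
    rw [he₂]
    exact hroot q hq_sq
end

section
/- Fix integers k, m ≥ 1. The multipliers of C at the roots of p are C′(0) = (k−1)(2k−1)/(2k²) and C′(1) = (m−1)(2m−1)/(2m²); moreover 0 ≤ (k−1)(2k−1)/(2k²) < 1 and 0 ≤ (m−1)(2m−1)/(2m²) < 1, so both roots of p are attracting fixed points of C. -/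
open Filter Topology

/-- If `f x = x - (x - a) * g x` near `a` with `g` differentiable at `a`, then the multiplier of
the fixed point `a` of `f` is `1 - g a`. -/
theorem deriv_eq_one_sub_of_eventuallyEq {f g : ℝ → ℝ} {a : ℝ} (hg : DifferentiableAt ℝ g a)
    (hf : f =ᶠ[𝓝 a] fun x => x - (x - a) * g x) : deriv f a = 1 - g a := by
  have h := (hasDerivAt_id a).sub (((hasDerivAt_id a).sub_const a).mul hg.hasDerivAt)
  rw [hf.deriv_eq]
  exact (h.deriv).trans (by simp)

/-- The multiplier of Chebyshev's method at a root of multiplicity `n` lies in `[0, 1)`. -/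
theorem chebyshev_multiplier_mem_Ico {n : ℕ} (hn : 1 ≤ n) :
    ((n : ℝ) - 1) * (2 * n - 1) / (2 * (n : ℝ) ^ 2) ∈ Set.Ico (0 : ℝ) 1 := by
  have h : (1 : ℝ) ≤ n := by exact_mod_cast hn
  constructor
  · exact div_nonneg (mul_nonneg (by linarith) (by linarith)) (by positivity)
  · rw [div_lt_one (by positivity)]
    nlinarith

/-- For `k, m ≥ 1`, the multipliers of the Chebyshev map `C` for `z^k(z-1)^m` at the roots
`0` and `1` of `p` are `(k-1)(2k-1)/(2k²)` and `(m-1)(2m-1)/(2m²)` respectively; both lie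
in `[0, 1)`, so both roots are attracting fixed points of `C`. -/
theorem roots_are_attracting (k m : ℕ) (hk : 1 ≤ k) (hm : 1 ≤ m)
    (C : ℝ → ℝ)
    (hC : ∀ x : ℝ, x ≠ (k : ℝ) / ((k : ℝ) + m) →
      C x = x - x * (x - 1) *
        (((k : ℝ) + m) * (3 * k + 3 * m - 1) * x ^ 2 - 2 * k * (3 * k + 3 * m - 1) * x
          + (3 * (k : ℝ) ^ 2 - k)) / (2 * (((k : ℝ) + m) * x - k) ^ 3)) :
    deriv C 0 = ((k : ℝ) - 1) * (2 * k - 1) / (2 * (k : ℝ) ^ 2) ∧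
    deriv C 1 = ((m : ℝ) - 1) * (2 * m - 1) / (2 * (m : ℝ) ^ 2) ∧
    0 ≤ ((k : ℝ) - 1) * (2 * k - 1) / (2 * (k : ℝ) ^ 2) ∧
    ((k : ℝ) - 1) * (2 * k - 1) / (2 * (k : ℝ) ^ 2) < 1 ∧
    0 ≤ ((m : ℝ) - 1) * (2 * m - 1) / (2 * (m : ℝ) ^ 2) ∧
    ((m : ℝ) - 1) * (2 * m - 1) / (2 * (m : ℝ) ^ 2) < 1 := by
  have hk' : (1 : ℝ) ≤ k := by exact_mod_cast hk
  have hm' : (1 : ℝ) ≤ m := by exact_mod_cast hm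
  have hk0 : (k : ℝ) ≠ 0 := by positivity
  have hm0 : (m : ℝ) ≠ 0 := by positivity
  have hξ0 : (0 : ℝ) ≠ (k : ℝ) / ((k : ℝ) + m) := by positivity
  have hξ1 : (1 : ℝ) ≠ (k : ℝ) / ((k : ℝ) + m) := by
    rw [ne_eq, eq_div_iff (by positivity)]
    intro h
    linarith
  obtain ⟨hk_nonneg, hk_lt⟩ := chebyshev_multiplier_mem_Ico hk
  obtain ⟨hm_nonneg, hm_lt⟩ := chebyshev_multiplier_mem_Ico hm
  refine ⟨?_, ?_, hk_nonneg, hk_lt, hm_nonneg, hm_lt⟩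
  · rw [deriv_eq_one_sub_of_eventuallyEq (f := C) (a := 0) (g := fun x => (x - 1) *
        (((k : ℝ) + m) * (3 * k + 3 * m - 1) * x ^ 2 - 2 * k * (3 * k + 3 * m - 1) * x
          + (3 * (k : ℝ) ^ 2 - k)) / (2 * (((k : ℝ) + m) * x - k) ^ 3))]
    · simp only [mul_zero, zero_sub]
      field_simp
      ring
    · refine DifferentiableAt.fun_div (by fun_prop) (by fun_prop) ?_
      simpa using hk0
    · filter_upwards [isOpen_ne.mem_nhds hξ0] with x hx
      rw [hC x hx]
      ring
  · rw [deriv_eq_one_sub_of_eventuallyEq (f := C) (a := 1) (g := fun x => x *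
        (((k : ℝ) + m) * (3 * k + 3 * m - 1) * x ^ 2 - 2 * k * (3 * k + 3 * m - 1) * x
          + (3 * (k : ℝ) ^ 2 - k)) / (2 * (((k : ℝ) + m) * x - k) ^ 3))]
    · simp only [mul_one, add_sub_cancel_left]
      field_simp
      ring
    · refine DifferentiableAt.fun_div (by fun_prop) (by fun_prop) ?_
      simpa using hm0
    · filter_upwards [isOpen_ne.mem_nhds hξ1] with x hx
      rw [hC x hx]
      ring
end

section
/- Fix integers k, m ≥ 1 with d = k + m ≥ 2, and define S : ℂ → ℂ by S(w) = 1/C(1/w) (with S(0) = 0). Then S has derivative 2d²/(2d² − 3d + 1) at 0; in particular this multiplier of the fixed point ∞ of C is strictly greater than 1, so ∞ is a repelling fixed point. -/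
/-- For `k, m ≥ 1` with `d = k + m ≥ 2`, the map `S(w) = 1/C(1/w)` (with `S(0) = 0`),
where `C` is the Chebyshev map for `z^k(z-1)^m`, has derivative `2d²/(2d² - 3d + 1)` at
`0`; this multiplier of the fixed point `∞` of `C` is `> 1`, so `∞` is repelling. -/
theorem infinity_repelling (k m : ℕ) (hk : 1 ≤ k) (hm : 1 ≤ m)
    (d : ℕ) (hd : d = k + m) (hd2 : 2 ≤ d)
    (C : ℂ → ℂ)
    (hC : ∀ z : ℂ, ((k : ℂ) + m) * z ≠ k →
      C z = z - z * (z - 1) *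
        (((k : ℂ) + m) * (3 * k + 3 * m - 1) * z ^ 2 - 2 * k * (3 * k + 3 * m - 1) * z
          + (3 * (k : ℂ) ^ 2 - k)) / (2 * (((k : ℂ) + m) * z - k) ^ 3))
    (S : ℂ → ℂ) (hS0 : S 0 = 0) (hS : ∀ w : ℂ, w ≠ 0 → S w = 1 / C (1 / w)) :
    HasDerivAt S (2 * (d : ℂ) ^ 2 / (2 * (d : ℂ) ^ 2 - 3 * d + 1)) 0 ∧
      1 < 2 * (d : ℝ) ^ 2 / (2 * (d : ℝ) ^ 2 - 3 * d + 1) := by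
  have hdC : (k : ℂ) + m = d := by rw [hd]; push_cast; ring
  have hd0 : (d : ℂ) ≠ 0 := by exact_mod_cast (by omega : d ≠ 0)
  have hdR : (2 : ℝ) ≤ d := by exact_mod_cast hd2
  have hdenR : 0 < 2 * (d : ℝ) ^ 2 - 3 * d + 1 := by nlinarith
  have hden : 2 * (d : ℂ) ^ 2 - 3 * d + 1 ≠ 0 := by exact_mod_cast hdenR.ne'
  refine ⟨?_, by rw [lt_div_iff₀ hdenR]; linarith⟩
  -- Near `0`, `S w = w * (F w)⁻¹` with `F` continuous and nonvanishing at `0`.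
  set F : ℂ → ℂ := fun w ↦ 1 - (1 - w) *
    (d * (3 * d - 1) - 2 * k * (3 * d - 1) * w + (3 * (k : ℂ) ^ 2 - k) * w ^ 2) /
      (2 * (d - k * w) ^ 3) with hF
  have hF0 : F 0 = (2 * (d : ℂ) ^ 2 - 3 * d + 1) / (2 * (d : ℂ) ^ 2) := by
    simp only [hF, mul_zero, sub_zero]
    field_simp
    ring
  have hF0_ne : F 0 ≠ 0 := by
    rw [hF0]
    exact div_ne_zero hden (by simpa using hd0)
  have hFcont : ContinuousAt F 0 := by
    refine continuousAt_const.sub (ContinuousAt.div (by fun_prop) (by fun_prop) ?_)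
    simpa using hd0
  have hlim : Filter.Tendsto (fun w ↦ (F w)⁻¹) (nhdsWithin 0 {0}ᶜ)
      (nhds (2 * (d : ℂ) ^ 2 / (2 * (d : ℂ) ^ 2 - 3 * d + 1))) := by
    rw [← inv_div, ← hF0]
    exact (hFcont.inv₀ hF0_ne).tendsto.mono_left nhdsWithin_le_nhds
  have hpole : ∀ᶠ w : ℂ in nhdsWithin 0 {0}ᶜ, (d : ℂ) - k * w ≠ 0 := by
    have hcont : ContinuousAt (fun w : ℂ ↦ (d : ℂ) - k * w) 0 := by fun_prop
    exact (hcont.eventually_ne (by simpa using hd0)).filter_mono nhdsWithin_le_nhds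
  rw [hasDerivAt_iff_tendsto_slope]
  refine hlim.congr' ?_
  filter_upwards [hpole, self_mem_nhdsWithin] with w hw hw0
  replace hw0 : w ≠ 0 := hw0
  have hz : ((k : ℂ) + m) * (1 / w) ≠ k := by
    rw [hdC, mul_one_div, Ne, div_eq_iff hw0]
    exact sub_ne_zero.mp hw
  have hpole_z : (d : ℂ) * (1 / w) - k = (d - k * w) / w := by field_simp
  have hCw : C (1 / w) = F w / w := by
    have hlin : 3 * (k : ℂ) + 3 * m - 1 = 3 * d - 1 := by rw [← hdC]; ring
    rw [hC _ hz, hlin, hdC, hpole_z]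
    simp only [hF]
    field_simp
  rw [slope_def_field, hS w hw0, hS0, hCw, sub_zero, sub_zero, one_div_div, div_right_comm,
    div_self hw0, one_div]
end

section
/- Fix integers k, m ≥ 1. Then C(x) > x for every real x < 0, and C(x) < x for every real x > 1. -/
/-- The quadratic factor of the Chebyshev map is positive on the negative half-line. -/
lemma chebyshev_quadratic_pos_of_neg {a b x : ℝ} (ha : 1 ≤ a) (hb : 1 ≤ b) (hx : x < 0) :
    0 < (a + b) * (3 * a + 3 * b - 1) * x ^ 2 - 2 * a * (3 * a + 3 * b - 1) * x
      + (3 * a ^ 2 - a) := by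
  have hs : 0 < 3 * a + 3 * b - 1 := by linarith
  have h₂ : 0 < (a + b) * (3 * a + 3 * b - 1) * x ^ 2 :=
    mul_pos (mul_pos (by linarith) hs) (sq_pos_of_neg hx)
  have h₁ : 0 < 2 * a * (3 * a + 3 * b - 1) * (-x) :=
    mul_pos (mul_pos (by linarith) hs) (neg_pos.mpr hx)
  have h₀ : 0 < 3 * a ^ 2 - a := by nlinarith
  linarith

/-- The quadratic factor of the Chebyshev map is positive to the right of `1`, by the symmetry
`x ↦ 1 - x` exchanging the two multiplicities. -/
lemma chebyshev_quadratic_pos_of_one_lt {a b x : ℝ} (ha : 1 ≤ a) (hb : 1 ≤ b) (hx : 1 < x) :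
    0 < (a + b) * (3 * a + 3 * b - 1) * x ^ 2 - 2 * a * (3 * a + 3 * b - 1) * x
      + (3 * a ^ 2 - a) := by
  have h := chebyshev_quadratic_pos_of_neg hb ha (sub_neg.mpr hx)
  linarith

/-- For `k, m ≥ 1`, the Chebyshev map `C` for `z^k(z-1)^m` satisfies `C(x) > x` for every
real `x < 0` and `C(x) < x` for every real `x > 1`. -/
theorem chebyshev_displacement_outside (k m : ℕ) (hk : 1 ≤ k) (hm : 1 ≤ m)
    (C : ℝ → ℝ)
    (hC : ∀ x : ℝ, x ≠ (k : ℝ) / ((k : ℝ) + m) →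
      C x = x - x * (x - 1) *
        (((k : ℝ) + m) * (3 * k + 3 * m - 1) * x ^ 2 - 2 * k * (3 * k + 3 * m - 1) * x
          + (3 * (k : ℝ) ^ 2 - k)) / (2 * (((k : ℝ) + m) * x - k) ^ 3)) :
    (∀ x : ℝ, x < 0 → x < C x) ∧ (∀ x : ℝ, 1 < x → C x < x) := by
  have hk' : (1 : ℝ) ≤ k := by exact_mod_cast hk
  have hm' : (1 : ℝ) ≤ m := by exact_mod_cast hm
  have hkm : (0 : ℝ) < k + m := by linarith
  refine ⟨fun x hx => ?_, fun x hx => ?_⟩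
  · have hξ : x < (k : ℝ) / (k + m) := hx.trans (by positivity)
    have hd : ((k : ℝ) + m) * x - k < 0 := by nlinarith
    rw [hC x hξ.ne, lt_sub_comm, sub_self]
    exact div_neg_of_pos_of_neg
      (mul_pos (mul_pos_of_neg_of_neg hx (by linarith)) (chebyshev_quadratic_pos_of_neg hk' hm' hx))
      (mul_neg_of_pos_of_neg two_pos (Odd.pow_neg (by decide) hd))
  · have hξ : (k : ℝ) / (k + m) < x := by
      refine lt_trans ?_ hx
      rw [div_lt_one hkm]
      linarith
    have hd : 0 < ((k : ℝ) + m) * x - k := by nlinarith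
    rw [hC x hξ.ne', sub_lt_self_iff]
    exact div_pos
      (mul_pos (mul_pos (by linarith) (by linarith)) (chebyshev_quadratic_pos_of_one_lt hk' hm' hx))
      (mul_pos two_pos (pow_pos hd 3))
end

section
/- Fix integers k, m ≥ 1 and let e₁ = k/(k+m) − √(km(3k+3m−1))/((k+m)(3k+3m−1)) be the smaller extraneous fixed point and ξ = k/(k+m) the pole of C. Then C(x) < x for every x ∈ (0, e₁), and C(x) > x for every x ∈ (e₁, ξ). -/
/-- With `d` the half-distance between its roots, the quadratic factor of the Chebyshev
displacement is `n (3n - 1) ((x - k/n)² - d²)`, where `n = k + m`. -/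
lemma chebyshev_quadratic_eq {k m : ℝ} (hk : 1 ≤ k) (hm : 1 ≤ m) (x : ℝ) :
    (k + m) * (3 * k + 3 * m - 1) * x ^ 2 - 2 * k * (3 * k + 3 * m - 1) * x + (3 * k ^ 2 - k) =
      (k + m) * (3 * k + 3 * m - 1) * ((x - k / (k + m)) ^ 2 -
        (√(k * m * (3 * k + 3 * m - 1)) / ((k + m) * (3 * k + 3 * m - 1))) ^ 2) := by
  have hn : k + m ≠ 0 := by linarith
  have ha : 0 < 3 * k + 3 * m - 1 := by linarith
  have hs : 0 ≤ k * m * (3 * k + 3 * m - 1) := by positivity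
  rw [div_pow, Real.sq_sqrt hs]
  have ha' := ha.ne'
  generalize h : 3 * k + 3 * m - 1 = a at *
  field_simp
  subst h
  ring

/-- The smaller root of the quadratic factor is positive. -/
lemma chebyshev_halfDist_lt {k m : ℝ} (hk : 1 ≤ k) (hm : 1 ≤ m) :
    √(k * m * (3 * k + 3 * m - 1)) / ((k + m) * (3 * k + 3 * m - 1)) < k / (k + m) := by
  have ha : 0 < 3 * k + 3 * m - 1 := by linarith
  have hlt : √(k * m * (3 * k + 3 * m - 1)) < k * (3 * k + 3 * m - 1) := by
    rw [Real.sqrt_lt' (by positivity)]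
    have h : m < k * (3 * k + 3 * m - 1) := by nlinarith
    have := mul_lt_mul_of_pos_left h (by positivity : 0 < k * (3 * k + 3 * m - 1))
    nlinarith
  rw [div_lt_div_iff₀ (by positivity) (by positivity)]
  have := mul_lt_mul_of_pos_left hlt (by positivity : 0 < k + m)
  linarith

/-- For `k, m ≥ 1`, with `e₁` the smaller extraneous fixed point and `ξ = k/(k+m)` the
pole of the Chebyshev map `C` for `z^k(z-1)^m`: `C(x) < x` on `(0, e₁)` and `C(x) > x` on
`(e₁, ξ)`. -/
theorem chebyshev_displacement_inside (k m : ℕ) (hk : 1 ≤ k) (hm : 1 ≤ m)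
    (C : ℝ → ℝ)
    (hC : ∀ x : ℝ, x ≠ (k : ℝ) / ((k : ℝ) + m) →
      C x = x - x * (x - 1) *
        (((k : ℝ) + m) * (3 * k + 3 * m - 1) * x ^ 2 - 2 * k * (3 * k + 3 * m - 1) * x
          + (3 * (k : ℝ) ^ 2 - k)) / (2 * (((k : ℝ) + m) * x - k) ^ 3))
    (e₁ : ℝ)
    (he₁ : e₁ = (k : ℝ) / ((k : ℝ) + m)
      - Real.sqrt ((k : ℝ) * m * (3 * k + 3 * m - 1)) / (((k : ℝ) + m) * (3 * k + 3 * m - 1)))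
    (ξ : ℝ) (hξ : ξ = (k : ℝ) / ((k : ℝ) + m)) :
    (∀ x : ℝ, x ∈ Set.Ioo (0 : ℝ) e₁ → C x < x) ∧
      (∀ x : ℝ, x ∈ Set.Ioo e₁ ξ → x < C x) := by
  have hk' : (1 : ℝ) ≤ k := by exact_mod_cast hk
  have hm' : (1 : ℝ) ≤ m := by exact_mod_cast hm
  have ha : (0 : ℝ) < 3 * k + 3 * m - 1 := by linarith
  have hn : (0 : ℝ) < (k : ℝ) + m := by linarith
  have hd : 0 < √((k : ℝ) * m * (3 * k + 3 * m - 1)) / (((k : ℝ) + m) * (3 * k + 3 * m - 1)) := by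
    positivity
  have hdξ := chebyshev_halfDist_lt hk' hm'
  have hquad := chebyshev_quadratic_eq hk' hm'
  have hna := mul_pos hn ha
  have hξ1 : ξ < 1 := by
    rw [hξ, div_lt_one hn]
    linarith
  rw [← hξ] at hC he₁ hdξ
  simp only [← hξ] at hquad
  set d := √((k : ℝ) * m * (3 * k + 3 * m - 1)) / (((k : ℝ) + m) * (3 * k + 3 * m - 1))
  have hden : ∀ x < ξ, 2 * (((k : ℝ) + m) * x - k) ^ 3 < 0 := by
    intro x hx
    rw [hξ, lt_div_iff₀ hn] at hx
    have := Odd.pow_neg (by decide : Odd 3) (by linarith : ((k : ℝ) + m) * x - k < 0)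
    linarith
  constructor
  · rintro x ⟨hx0, hxe⟩
    have hxξ : x < ξ := by linarith
    rw [hC x hxξ.ne, hquad, sub_lt_self_iff]
    refine div_pos_of_neg_of_neg ?_ (hden x hxξ)
    exact mul_neg_of_neg_of_pos (mul_neg_of_pos_of_neg hx0 (by linarith))
      (mul_pos hna (by nlinarith))
  · rintro x ⟨hxe, hxξ⟩
    rw [hC x hxξ.ne, hquad, lt_sub_comm, sub_self]
    refine div_neg_of_pos_of_neg ?_ (hden x hxξ)
    exact mul_pos_of_neg_of_neg (mul_neg_of_pos_of_neg (by linarith) (by linarith))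
      (mul_neg_of_pos_of_neg hna (by nlinarith))
end

section
/- Fix integers k, m ≥ 1. Then C(x) < 0 for every real x < 0, and C(x) > 1 for every real x > 1; i.e. the intervals (−∞, 0) and (1, ∞) are forward invariant under C. -/
/-- The polynomial inequality behind both halves of the invariance statement: `n` is the degree
`k + m`, `a` is the multiplicity of the nearer root and `y` is the distance to that root. -/
lemma chebyshev_numerator_lt {n a y : ℝ} (hn : 2 ≤ n) (ha : 1 ≤ a) (hy : 0 < y) :
    (y + 1) * (n * (3 * n - 1) * y ^ 2 + 2 * a * (3 * n - 1) * y + (3 * a ^ 2 - a)) <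
      2 * (n * y + a) ^ 3 := by
  have hn0 : 0 < n := by linarith
  have ha0 : 0 < a := by linarith
  have cubic : 0 < n * ((2 * n - 1) * (n - 1)) * y ^ 3 := by
    have h₁ : 0 < 2 * n - 1 := by linarith
    have h₂ : 0 < n - 1 := by linarith
    positivity
  have quadratic :
      0 ≤ (3 * n ^ 2 * (a - 1) + 3 * n * a * (n - 2) + n + 2 * a) * y ^ 2 := by
    have h₁ : 0 ≤ a - 1 := by linarith
    have h₂ : 0 ≤ n - 2 := by linarith
    positivity
  have linear : 0 ≤ a * ((a - 1) * (6 * n - 3)) * y := by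
    have h₁ : 0 ≤ a - 1 := by linarith
    have h₂ : 0 ≤ 6 * n - 3 := by linarith
    positivity
  have constant : 0 ≤ a * ((2 * a - 1) * (a - 1)) := by
    have h₁ : 0 ≤ a - 1 := by linarith
    have h₂ : 0 ≤ 2 * a - 1 := by linarith
    positivity
  linarith

/-- The Chebyshev step, measured by the distance to the nearer root, remains positive. -/
lemma chebyshev_step_lt {n a y : ℝ} (hn : 2 ≤ n) (ha : 1 ≤ a) (hy : 0 < y) :
    y * (y + 1) * (n * (3 * n - 1) * y ^ 2 + 2 * a * (3 * n - 1) * y + (3 * a ^ 2 - a)) /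
      (2 * (n * y + a) ^ 3) < y := by
  have hD : 0 < n * y + a := by
    have : 0 < n * y := mul_pos (by linarith) hy
    linarith
  rw [div_lt_iff₀ (by positivity), mul_assoc]
  exact mul_lt_mul_of_pos_left (chebyshev_numerator_lt hn ha hy) hy

/-- For `k, m ≥ 1`, the Chebyshev map `C` for `z^k(z-1)^m` satisfies `C(x) < 0` for every
real `x < 0` and `C(x) > 1` for every real `x > 1`; i.e. `(-∞, 0)` and `(1, ∞)` are
forward invariant under `C`. -/
theorem chebyshev_forward_invariance (k m : ℕ) (hk : 1 ≤ k) (hm : 1 ≤ m)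
    (C : ℝ → ℝ)
    (hC : ∀ x : ℝ, x ≠ (k : ℝ) / ((k : ℝ) + m) →
      C x = x - x * (x - 1) *
        (((k : ℝ) + m) * (3 * k + 3 * m - 1) * x ^ 2 - 2 * k * (3 * k + 3 * m - 1) * x
          + (3 * (k : ℝ) ^ 2 - k)) / (2 * (((k : ℝ) + m) * x - k) ^ 3)) :
    (∀ x : ℝ, x < 0 → C x < 0) ∧ (∀ x : ℝ, 1 < x → 1 < C x) := by
  have hk' : (1 : ℝ) ≤ k := by exact_mod_cast hk
  have hm' : (1 : ℝ) ≤ m := by exact_mod_cast hm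
  have hn : (2 : ℝ) ≤ k + m := by linarith
  constructor
  · intro x hx
    have hξ : (0 : ℝ) ≤ k / (k + m) := by positivity
    have step := chebyshev_step_lt hn hk' (neg_pos.mpr hx)
    rw [hC x (by linarith)]
    rw [show 2 * (((k : ℝ) + m) * -x + k) ^ 3 = -(2 * (((k : ℝ) + m) * x - k) ^ 3) by ring,
      div_neg, ← neg_div] at step
    ring_nf at step ⊢
    linarith
  · intro x hx
    have hξ : (k : ℝ) / (k + m) ≤ 1 := div_le_one_of_le₀ (by linarith) (by linarith)
    have step := chebyshev_step_lt hn hm' (sub_pos.mpr hx)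
    rw [hC x (by linarith)]
    rw [show ((k : ℝ) + m) * (x - 1) + m = ((k : ℝ) + m) * x - k by ring] at step
    ring_nf at step ⊢
    linarith
end

section
/- Fix integers k, m ≥ 1 and let e₁ = k/(k+m) − √(km(3k+3m−1))/((k+m)(3k+3m−1)) and e₂ = k/(k+m) + √(km(3k+3m−1))/((k+m)(3k+3m−1)) be the two extraneous fixed points of C. Then for every real x < e₁ the iterates Cⁿ(x) converge to 0 as n → ∞, and for every real x > e₂ the iterates Cⁿ(x) converge to 1 as n → ∞; i.e. (−∞, e₁) is contained in the basin of 0 and (e₂, ∞) is contained in the basin of 1. -/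
open Filter

/-- The Chebyshev map for `z ^ k * (z - 1) ^ m`, with real parameters `k` and `m`. -/
def IsChebyshevMap (k m : ℝ) (C : ℝ → ℝ) : Prop :=
  ∀ x : ℝ, x ≠ k / (k + m) →
    C x = x - x * (x - 1) *
      ((k + m) * (3 * k + 3 * m - 1) * x ^ 2 - 2 * k * (3 * k + 3 * m - 1) * x
        + (3 * k ^ 2 - k)) / (2 * ((k + m) * x - k) ^ 3)

/-- The conjugation `x ↦ 1 - x` exchanges the two roots and their multiplicities. -/
theorem IsChebyshevMap.one_sub {k m : ℝ} {C : ℝ → ℝ} (hk : 1 ≤ k) (hm : 1 ≤ m)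
    (hC : IsChebyshevMap k m C) : IsChebyshevMap m k (fun y => 1 - C (1 - y)) := by
  intro y hy
  have hs : k + m ≠ 0 := by positivity
  have hs' : m + k ≠ 0 := by positivity
  have hu : (m + k) * y - m ≠ 0 := by
    intro h
    apply hy
    rw [eq_div_iff hs']
    linarith
  have hne : 1 - y ≠ k / (k + m) := by
    intro h
    rw [eq_div_iff hs] at h
    apply hu
    linarith
  have hden : (k + m) * (1 - y) - k = -((m + k) * y - m) := by ring
  simp only [hC _ hne, hden]
  field_simp
  ring

/-- The cubic numerator of `C x / x`, as a function of `v = k - (k + m) x`, is nonnegative. -/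
theorem chebyshev_numerator_nonneg {k m v : ℝ} (hk : 1 ≤ k) (hm : 0 ≤ m) (hv : 0 ≤ v) :
    (v + m) * ((3 * k + 3 * m - 1) * v ^ 2 - k * m) ≤ 2 * (k + m) ^ 2 * v ^ 3 := by
  have hquad : 0 ≤ (4 * k - 3) * v ^ 2 - (3 * k - 1) * v + k := by
    nlinarith [sq_nonneg (v - 1), sq_nonneg (2 * v - 1), mul_nonneg (sub_nonneg.2 hk) hv,
      mul_nonneg (sub_nonneg.2 hk) (sq_nonneg (2 * v - 1))]
  have hcubic : 0 ≤ (v - 1) ^ 2 * (2 * v + 1) + (k - 1) :=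
    add_nonneg (by positivity) (by linarith)
  have hlead : 0 ≤ (2 * k - 1) * (k - 1) := mul_nonneg (by linarith) (by linarith)
  have h₁ := mul_nonneg (sq_nonneg m) hcubic
  have h₂ := mul_nonneg (mul_nonneg hm hv) hquad
  have h₃ := mul_nonneg hlead (pow_nonneg hv 3)
  linarith

/-- On a ray `(-∞, b]` lying left of the smaller extraneous fixed point, `C` multiplies every
point by a factor in `[0, c]` with a uniform `c < 1`. -/
theorem IsChebyshevMap.exists_contraction {k m b : ℝ} {C : ℝ → ℝ} (hk : 1 ≤ k) (hm : 1 ≤ m)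
    (hC : IsChebyshevMap k m C) (hb : 0 < k - (k + m) * b)
    (hE : k * m < (3 * k + 3 * m - 1) * (k - (k + m) * b) ^ 2) :
    ∃ c < 1, ∀ x ≤ b, ∃ r, 0 ≤ r ∧ r ≤ c ∧ C x = x * r := by
  set w := k - (k + m) * b with hw
  have hs : 0 < k + m := by linarith
  refine ⟨1 - ((3 * k + 3 * m - 1) * w ^ 2 - k * m) / (2 * (k + m) ^ 2 * w ^ 2),
    sub_lt_self _ (div_pos (by linarith) (by positivity)), fun x hx => ?_⟩
  obtain ⟨v, hv⟩ : ∃ v, v = k - (k + m) * x := ⟨_, rfl⟩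
  have hwv : w ≤ v := by
    rw [hw, hv]
    nlinarith
  have hv0 : 0 < v := hb.trans_le hwv
  have hsq : w ^ 2 ≤ v ^ 2 := pow_le_pow_left₀ hb.le hwv 2
  refine ⟨1 - (v + m) * ((3 * k + 3 * m - 1) * v ^ 2 - k * m) / (2 * (k + m) ^ 2 * v ^ 3),
    ?_, ?_, ?_⟩
  · rw [sub_nonneg, div_le_one (by positivity)]
    exact chebyshev_numerator_nonneg hk (by linarith) hv0.le
  · apply sub_le_sub_left
    have hEv : 0 ≤ (3 * k + 3 * m - 1) * v ^ 2 - k * m := by nlinarith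
    calc ((3 * k + 3 * m - 1) * w ^ 2 - k * m) / (2 * (k + m) ^ 2 * w ^ 2)
        ≤ ((3 * k + 3 * m - 1) * v ^ 2 - k * m) / (2 * (k + m) ^ 2 * v ^ 2) := by
          rw [div_le_div_iff₀ (by positivity) (by positivity)]
          have := mul_le_mul_of_nonneg_left hsq (show 0 ≤ k * m * (2 * (k + m) ^ 2) by positivity)
          linarith
      _ = v * ((3 * k + 3 * m - 1) * v ^ 2 - k * m) / (2 * (k + m) ^ 2 * v ^ 3) := by
          field_simp
      _ ≤ (v + m) * ((3 * k + 3 * m - 1) * v ^ 2 - k * m) / (2 * (k + m) ^ 2 * v ^ 3) := by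
          gcongr
          linarith
  · have hne : x ≠ k / (k + m) := by
      intro h
      rw [eq_div_iff hs.ne'] at h
      linarith
    have hden : (k + m) * x - k = -v := by rw [hv]; ring
    have hx' : x = (k - v) / (k + m) := by
      rw [eq_div_iff hs.ne', hv]
      ring
    rw [hC x hne, hden, hx']
    field_simp
    ring

/-- A self-map that scales each point of `(-∞, b]`, `0 ≤ b`, by a factor in `[0, c]`, `c < 1`,
has all orbits starting there converging to `0`. -/
theorem tendsto_iterate_zero_of_contraction {C : ℝ → ℝ} {b c : ℝ} (hb : 0 ≤ b) (hc : c < 1)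
    (h : ∀ x ≤ b, ∃ r, 0 ≤ r ∧ r ≤ c ∧ C x = x * r) {x : ℝ} (hx : x ≤ b) :
    Tendsto (fun n : ℕ => C^[n] x) atTop (nhds 0) := by
  have hc0 : 0 ≤ c := by
    obtain ⟨r, h₀, h₁, -⟩ := h x hx
    exact h₀.trans h₁
  have key : ∀ n : ℕ, C^[n] x ≤ b ∧ |C^[n] x| ≤ c ^ n * |x| := by
    intro n
    induction n with
    | zero => simpa using hx
    | succ n ih =>
      obtain ⟨r, h₀, h₁, hr⟩ := h _ ih.1
      rw [Function.iterate_succ_apply', hr]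
      constructor
      · rcases le_total (C^[n] x) 0 with h0 | h0
        · exact (mul_nonpos_of_nonpos_of_nonneg h0 h₀).trans hb
        · exact (mul_le_of_le_one_right h0 (h₁.trans hc.le)).trans ih.1
      · rw [abs_mul, abs_of_nonneg h₀, pow_succ, mul_right_comm]
        exact mul_le_mul ih.2 h₁ h₀ (by positivity)
  refine squeeze_zero_norm (fun n => (key n).2) ?_
  simpa using (tendsto_pow_atTop_nhds_zero_of_lt_one hc0 hc).mul_const |x|

/-- Points left of the smaller extraneous fixed point lie in the basin of `0`. -/
theorem IsChebyshevMap.tendsto_iterate_zero {k m : ℝ} {C : ℝ → ℝ} (hk : 1 ≤ k) (hm : 1 ≤ m)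
    (hC : IsChebyshevMap k m C) {x : ℝ}
    (hx : x < k / (k + m)
      - Real.sqrt (k * m * (3 * k + 3 * m - 1)) / ((k + m) * (3 * k + 3 * m - 1))) :
    Tendsto (fun n : ℕ => C^[n] x) atTop (nhds 0) := by
  have hs : 0 < k + m := by linarith
  have ha : 0 < 3 * k + 3 * m - 1 := by linarith
  have hkm : 0 < k * m := by positivity
  have hxw : Real.sqrt (k * m * (3 * k + 3 * m - 1))
      < (3 * k + 3 * m - 1) * (k - (k + m) * x) := by
    rw [lt_sub_iff_add_lt, ← lt_sub_iff_add_lt', div_lt_iff₀ (by positivity)] at hx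
    calc _ < _ := hx
      _ = _ := by field_simp
  have hxpos : 0 < k - (k + m) * x :=
    pos_of_mul_pos_right ((Real.sqrt_nonneg _).trans_lt hxw) ha.le
  have hxE : k * m < (3 * k + 3 * m - 1) * (k - (k + m) * x) ^ 2 := by
    rw [Real.sqrt_lt (by positivity) (by positivity)] at hxw
    refine lt_of_mul_lt_mul_right (hxw.trans_eq ?_) ha.le
    ring
  rcases le_total x 0 with h0 | h0
  · obtain ⟨c, hc, h⟩ := hC.exists_contraction (b := 0) hk hm (by linarith) (by
      nlinarith [mul_pos hkm hs, mul_nonneg (sub_nonneg.2 hk) (sub_nonneg.2 hk)])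
    exact tendsto_iterate_zero_of_contraction le_rfl hc h h0
  · obtain ⟨c, hc, h⟩ := hC.exists_contraction hk hm hxpos hxE
    exact tendsto_iterate_zero_of_contraction h0 hc h le_rfl

/-- For `k, m ≥ 1`, with `e₁ < e₂` the two extraneous fixed points of the Chebyshev map
`C` for `z^k(z-1)^m`: for every `x < e₁` the iterates `Cⁿ(x)` converge to `0`, and for
every `x > e₂` they converge to `1`; i.e. `(-∞, e₁)` lies in the basin of `0` and
`(e₂, ∞)` in the basin of `1`. -/
theorem basins_contain_rays (k m : ℕ) (hk : 1 ≤ k) (hm : 1 ≤ m)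
    (C : ℝ → ℝ)
    (hC : ∀ x : ℝ, x ≠ (k : ℝ) / ((k : ℝ) + m) →
      C x = x - x * (x - 1) *
        (((k : ℝ) + m) * (3 * k + 3 * m - 1) * x ^ 2 - 2 * k * (3 * k + 3 * m - 1) * x
          + (3 * (k : ℝ) ^ 2 - k)) / (2 * (((k : ℝ) + m) * x - k) ^ 3))
    (e₁ e₂ : ℝ)
    (he₁ : e₁ = (k : ℝ) / ((k : ℝ) + m)
      - Real.sqrt ((k : ℝ) * m * (3 * k + 3 * m - 1)) / (((k : ℝ) + m) * (3 * k + 3 * m - 1)))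
    (he₂ : e₂ = (k : ℝ) / ((k : ℝ) + m)
      + Real.sqrt ((k : ℝ) * m * (3 * k + 3 * m - 1)) / (((k : ℝ) + m) * (3 * k + 3 * m - 1))) :
    (∀ x : ℝ, x < e₁ → Tendsto (fun n : ℕ => C^[n] x) atTop (nhds 0)) ∧
      (∀ x : ℝ, e₂ < x → Tendsto (fun n : ℕ => C^[n] x) atTop (nhds 1)) := by
  have hk' : (1 : ℝ) ≤ k := by exact_mod_cast hk
  have hm' : (1 : ℝ) ≤ m := by exact_mod_cast hm
  have hCheb : IsChebyshevMap k m C := hC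
  refine ⟨fun x hx => hCheb.tendsto_iterate_zero hk' hm' (he₁ ▸ hx), fun x hx => ?_⟩
  have hx' : 1 - x < (m : ℝ) / ((m : ℝ) + k)
      - Real.sqrt ((m : ℝ) * k * (3 * m + 3 * k - 1)) / (((m : ℝ) + k) * (3 * m + 3 * k - 1)) := by
    have hsum : (m : ℝ) / ((m : ℝ) + k) = 1 - (k : ℝ) / ((k : ℝ) + m) := by
      field_simp
      ring
    rw [hsum, mul_comm (m : ℝ) k, add_comm (m : ℝ) k, add_comm (3 * (m : ℝ)) (3 * k)]
    linarith
  have hlim := (hCheb.one_sub hk' hm').tendsto_iterate_zero hm' hk' hx'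
  have hconj : Function.Semiconj (fun y : ℝ => 1 - y) (fun y => 1 - C (1 - y)) C := fun y => by
    simp
  have hiter : ∀ n : ℕ, C^[n] x = 1 - (fun y => 1 - C (1 - y))^[n] (1 - x) := fun n => by
    simpa using ((hconj.iterate_right n) (1 - x)).symm
  simpa only [hiter, sub_zero] using hlim.const_sub 1
end

section
/- Fix an integer m ≥ 1 and let C : ℂ → ℂ be Chebyshev's method for p(z) = z^m(z−1)^m, given for 2z ≠ 1 by C(z) = z − z(z−1)·(2m(6m−1)z² − 2m(6m−1)z + 3m² − m)/(2(2mz − m)³). Then for every real y ≠ 0, C(1/2 + i·y) = 1/2 + i·φ(y), where φ(y) = (16(2m−1)(4m−1)y⁴ − 24m·y² − 1)/(128 m² y³); i.e. the vertical line through the pole 1/2 is forward invariant and C acts on it as φ. -/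
/-- For `m ≥ 1`, the Chebyshev map `C` for `p(z) = z^m(z-1)^m` maps the vertical line
through the pole `1/2` to itself, acting on it as the real map `φ`:
`C(1/2 + iy) = 1/2 + iφ(y)` for every real `y ≠ 0`. -/
theorem vertical_line_invariant (m : ℕ) (hm : 1 ≤ m)
    (C : ℂ → ℂ)
    (hC : ∀ z : ℂ, 2 * z ≠ 1 →
      C z = z - z * (z - 1) *
        (2 * (m : ℂ) * (6 * m - 1) * z ^ 2 - 2 * m * (6 * m - 1) * z + (3 * (m : ℂ) ^ 2 - m))
        / (2 * (2 * (m : ℂ) * z - m) ^ 3))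
    (φ : ℝ → ℝ)
    (hφ : ∀ y : ℝ, y ≠ 0 →
      φ y = (16 * (2 * (m : ℝ) - 1) * (4 * m - 1) * y ^ 4 - 24 * m * y ^ 2 - 1)
        / (128 * (m : ℝ) ^ 2 * y ^ 3)) :
    ∀ y : ℝ, y ≠ 0 →
      C (1 / 2 + Complex.I * (y : ℂ)) = 1 / 2 + Complex.I * ((φ y : ℝ) : ℂ) := by
  intro y hy
  have hyC : (y : ℂ) ≠ 0 := Complex.ofReal_ne_zero.mpr hy
  have hmC : (m : ℂ) ≠ 0 := Nat.cast_ne_zero.mpr (by lia)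
  have hI := Complex.I_sq
  have hz : 2 * (1 / 2 + Complex.I * (y : ℂ)) ≠ 1 := by
    intro h
    exact mul_ne_zero Complex.I_ne_zero hyC (by linear_combination h / 2)
  have hprod : (1 / 2 + Complex.I * (y : ℂ)) * (1 / 2 + Complex.I * y - 1) =
      -(1 / 4 + (y : ℂ) ^ 2) := by
    linear_combination (y : ℂ) ^ 2 * hI
  have hquad : 2 * (m : ℂ) * (6 * m - 1) * (1 / 2 + Complex.I * (y : ℂ)) ^ 2
      - 2 * m * (6 * m - 1) * (1 / 2 + Complex.I * y) + (3 * (m : ℂ) ^ 2 - m) =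
      -(2 * m * (6 * m - 1) * (y : ℂ) ^ 2 + m / 2) := by
    linear_combination 2 * (m : ℂ) * (6 * m - 1) * (y : ℂ) ^ 2 * hI
  have hden : 2 * (2 * (m : ℂ) * (1 / 2 + Complex.I * (y : ℂ)) - m) ^ 3 =
      -(16 * m ^ 3 * (y : ℂ) ^ 3) * Complex.I := by
    linear_combination 16 * (m : ℂ) ^ 3 * (y : ℂ) ^ 3 * Complex.I * hI
  rw [hC _ hz, hφ y hy, hprod, hquad, hden, ← div_div, Complex.div_I]
  push_cast
  field_simp
  ring
end

section
/- Fix an integer m ≥ 1 and let ζ > 0 satisfy φ(ζ) = 0. Then: (a) for every x > ζ there exists n ≥ 1 with φⁿ(x) ∈ (0, ζ]; and (b) for every real x such that φⁿ(x) ≠ 0 for all n ≥ 0, the set of n with φⁿ(x) ∈ (0, ζ) is infinite. -/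
open Function Set

/-- If `f` is positive on `(ζ, ∞)` and decreases its argument there by at least `δ > 0`, then every
orbit starting in `(ζ, ∞)` enters `(0, ζ]`. -/
lemma exists_iterate_mem_Ioc {f : ℝ → ℝ} {ζ δ : ℝ} (hδ : 0 < δ)
    (hpos : ∀ x, ζ < x → 0 < f x) (hle : ∀ x, ζ < x → f x ≤ x - δ) {x : ℝ} (hx : ζ < x) :
    ∃ n : ℕ, 1 ≤ n ∧ f^[n] x ∈ Ioc 0 ζ := by
  have key : ∀ k : ℕ, ∀ x, ζ < x → x ≤ ζ + k * δ → ∃ n : ℕ, 1 ≤ n ∧ f^[n] x ∈ Ioc 0 ζ := by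
    intro k
    induction k with
    | zero => intro x hx hk; norm_num at hk; linarith
    | succ k ih =>
      intro x hx hk
      rcases le_or_gt (f x) ζ with h | h
      · exact ⟨1, le_rfl, hpos x hx, h⟩
      · have hxδ := hle x hx
        push_cast at hk
        obtain ⟨n, -, hn⟩ := ih (f x) h (by linarith)
        exact ⟨n + 1, by omega, by rwa [iterate_succ_apply]⟩
  obtain ⟨k, hk⟩ := exists_nat_ge ((x - ζ) / δ)
  rw [div_le_iff₀ hδ] at hk
  exact key k x hx (by linarith)

/-- If `f` vanishes at `±ζ` and is positive on `(-ζ, 0)`, and orbits starting outside `[-ζ, ζ]` enter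
`[-ζ, 0)` or `(0, ζ]` on their own side, then every orbit avoiding `0` meets `(0, ζ)`. -/
lemma exists_iterate_mem_Ioo {f : ℝ → ℝ} {ζ : ℝ} (hζ : f ζ = 0) (hnegζ : f (-ζ) = 0)
    (hright : ∀ x, ζ < x → ∃ n : ℕ, f^[n] x ∈ Ioc 0 ζ)
    (hleft : ∀ x, x < -ζ → ∃ n : ℕ, f^[n] x ∈ Ico (-ζ) 0)
    (hneg : ∀ x ∈ Ioo (-ζ) 0, 0 < f x) {x : ℝ} (hx : ∀ n : ℕ, f^[n] x ≠ 0) :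
    ∃ n : ℕ, f^[n] x ∈ Ioo 0 ζ := by
  have hne : ∀ n, f^[n] x ≠ ζ := fun n h ↦ hx (n + 1) (by rw [iterate_succ_apply', h, hζ])
  have hne' : ∀ n, f^[n] x ≠ -ζ := fun n h ↦ hx (n + 1) (by rw [iterate_succ_apply', h, hnegζ])
  have of_pos : ∀ k, 0 < f^[k] x → ∃ n : ℕ, f^[n] x ∈ Ioo 0 ζ := by
    intro k hk
    rcases (hne k).lt_or_gt with h | h
    · exact ⟨k, hk, h⟩
    · obtain ⟨n, hn⟩ := hright _ h
      rw [← iterate_add_apply] at hn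
      exact ⟨n + k, hn.1, hn.2.lt_of_ne (hne _)⟩
  have of_mem : ∀ k, f^[k] x ∈ Ico (-ζ) 0 → ∃ n : ℕ, f^[n] x ∈ Ioo 0 ζ := by
    intro k hk
    refine of_pos (k + 1) ?_
    rw [iterate_succ_apply']
    exact hneg _ ⟨hk.1.lt_of_ne (hne' k).symm, hk.2⟩
  rcases (hx 0).lt_or_gt with h | h
  · rcases lt_or_ge x (-ζ) with h' | h'
    · obtain ⟨n, hn⟩ := hleft x h'
      exact of_mem n hn
    · exact of_mem 0 ⟨h', h⟩
  · exact of_pos 0 h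

/-- A quartic `A y⁴ - B y² - 1` vanishing at `ζ ≠ 0` factors, up to `ζ⁴`, through `y² - ζ²`. -/
lemma quartic_mul_pow_eq {A B ζ : ℝ} (hζ : A * ζ ^ 4 - B * ζ ^ 2 - 1 = 0) (y : ℝ) :
    (A * y ^ 4 - B * y ^ 2 - 1) * ζ ^ 4 =
      (y ^ 2 - ζ ^ 2) * (B * y ^ 2 * ζ ^ 2 + y ^ 2 + ζ ^ 2) := by
  linear_combination y ^ 4 * hζ

section Quartic

variable {A B C ζ : ℝ} {f : ℝ → ℝ}

lemma quartic_eq_zero (hC : 0 < C) (hζ : 0 < ζ)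
    (hf : ∀ y, y ≠ 0 → f y = (A * y ^ 4 - B * y ^ 2 - 1) / (C * y ^ 3)) (hζ0 : f ζ = 0) :
    A * ζ ^ 4 - B * ζ ^ 2 - 1 = 0 := by
  rw [hf ζ hζ.ne', div_eq_zero_iff] at hζ0
  exact hζ0.resolve_right (by positivity)

/-- Orbits of `(A y⁴ - B y² - 1) / (C y³)` starting to the right of its positive zero `ζ` enter
`(0, ζ]` when `A < C`. -/
lemma exists_iterate_mem_Ioc_of_quartic (hAC : A < C) (hB : 0 ≤ B) (hC : 0 < C) (hζ : 0 < ζ)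
    (hf : ∀ y, y ≠ 0 → f y = (A * y ^ 4 - B * y ^ 2 - 1) / (C * y ^ 3))
    (hroot : A * ζ ^ 4 - B * ζ ^ 2 - 1 = 0) {x : ℝ} (hx : ζ < x) :
    ∃ n : ℕ, 1 ≤ n ∧ f^[n] x ∈ Ioc 0 ζ := by
  refine exists_iterate_mem_Ioc (δ := (C - A) / C * ζ)
    (mul_pos (div_pos (sub_pos.2 hAC) hC) hζ) (fun y hy ↦ ?_) (fun y hy ↦ ?_) hx
  · have hy0 : 0 < y := hζ.trans hy
    have hsq : 0 < y ^ 2 - ζ ^ 2 := by nlinarith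
    rw [hf y hy0.ne']
    refine div_pos (pos_of_mul_pos_left (b := ζ ^ 4) ?_ (by positivity)) (by positivity)
    rw [quartic_mul_pow_eq hroot]
    positivity
  · have hy0 : 0 < y := hζ.trans hy
    have hle : f y ≤ A / C * y := by
      rw [hf y hy0.ne', div_le_iff₀ (by positivity)]
      have : A / C * y * (C * y ^ 3) = A * y ^ 4 := by field_simp
      rw [this]
      nlinarith [mul_nonneg hB (sq_nonneg y)]
    have hmul : (C - A) / C * ζ ≤ (C - A) / C * y :=
      mul_le_mul_of_nonneg_left hy.le (div_nonneg (sub_nonneg.2 hAC.le) hC.le)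
    have : (C - A) / C * y = y - A / C * y := by field_simp
    linarith

lemma quartic_pos_of_mem_Ioo (hB : 0 ≤ B) (hC : 0 < C)
    (hf : ∀ y, y ≠ 0 → f y = (A * y ^ 4 - B * y ^ 2 - 1) / (C * y ^ 3))
    (hroot : A * ζ ^ 4 - B * ζ ^ 2 - 1 = 0) {x : ℝ} (hx : x ∈ Ioo (-ζ) 0) : 0 < f x := by
  obtain ⟨hx1, hx0⟩ := hx
  have hζ : 0 < ζ := by linarith
  rw [hf x hx0.ne]
  refine div_pos_of_neg_of_neg (neg_of_mul_neg_left (b := ζ ^ 4) ?_ (by positivity))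
    (mul_neg_of_pos_of_neg hC (Odd.pow_neg (by decide) hx0))
  rw [quartic_mul_pow_eq hroot]
  exact mul_neg_of_neg_of_pos (by nlinarith) (by positivity)

/-- The mirror image of `exists_iterate_mem_Ioc_of_quartic`, for orbits to the left of `-ζ`. -/
lemma exists_iterate_mem_Ico_of_quartic (hAC : A < C) (hB : 0 ≤ B) (hC : 0 < C) (hζ : 0 < ζ)
    (hf : ∀ y, y ≠ 0 → f y = (A * y ^ 4 - B * y ^ 2 - 1) / (C * y ^ 3))
    (hroot : A * ζ ^ 4 - B * ζ ^ 2 - 1 = 0) {x : ℝ} (hx : x < -ζ) :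
    ∃ n : ℕ, f^[n] x ∈ Ico (-ζ) 0 := by
  have hg : ∀ y, y ≠ 0 → -f (-y) = (A * y ^ 4 - B * y ^ 2 - 1) / (C * y ^ 3) := by
    intro y hy
    rw [hf (-y) (neg_ne_zero.2 hy)]
    field_simp
  have hconj : Semiconj Neg.neg f (fun y ↦ -f (-y)) := fun y ↦ by simp
  obtain ⟨n, -, hn⟩ :=
    exists_iterate_mem_Ioc_of_quartic hAC hB hC hζ hg hroot (x := -x) (by linarith)
  rw [← hconj.iterate_right n x] at hn
  exact ⟨n, by linarith [hn.2], by linarith [hn.1]⟩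

end Quartic


/-- For `m ≥ 1` and `ζ > 0` with `φ(ζ) = 0`: (a) every `x > ζ` has some iterate
`φⁿ(x) ∈ (0, ζ]` with `n ≥ 1`; (b) if no iterate of `x` is `0`, then `φⁿ(x) ∈ (0, ζ)`
for infinitely many `n`. -/
theorem phi_iterates_return (m : ℕ) (hm : 1 ≤ m)
    (φ : ℝ → ℝ)
    (hφ : ∀ y : ℝ, y ≠ 0 →
      φ y = (16 * (2 * (m : ℝ) - 1) * (4 * m - 1) * y ^ 4 - 24 * m * y ^ 2 - 1)
        / (128 * (m : ℝ) ^ 2 * y ^ 3))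
    (ζ : ℝ) (hζ : 0 < ζ) (hζ0 : φ ζ = 0) :
    (∀ x : ℝ, ζ < x → ∃ n : ℕ, 1 ≤ n ∧ φ^[n] x ∈ Set.Ioc 0 ζ) ∧
    (∀ x : ℝ, (∀ n : ℕ, φ^[n] x ≠ 0) → {n : ℕ | φ^[n] x ∈ Set.Ioo 0 ζ}.Infinite) := by
  have hm' : (1 : ℝ) ≤ m := by exact_mod_cast hm
  have hAC : 16 * (2 * (m : ℝ) - 1) * (4 * m - 1) < 128 * (m : ℝ) ^ 2 := by nlinarith
  have hB : 0 ≤ 24 * (m : ℝ) := by positivity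
  have hC : 0 < 128 * (m : ℝ) ^ 2 := by positivity
  have hroot := quartic_eq_zero hC hζ hφ hζ0
  have hright : ∀ x : ℝ, ζ < x → ∃ n : ℕ, 1 ≤ n ∧ φ^[n] x ∈ Set.Ioc 0 ζ := fun x hx ↦
    exists_iterate_mem_Ioc_of_quartic hAC hB hC hζ hφ hroot hx
  have hnegζ : φ (-ζ) = 0 := by
    rw [hφ _ (neg_ne_zero.2 hζ.ne'), Even.neg_pow (by decide), even_two.neg_pow, hroot, zero_div]
  refine ⟨hright, fun x hx ↦ Set.infinite_of_forall_exists_gt fun N ↦ ?_⟩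
  obtain ⟨n, hn⟩ := exists_iterate_mem_Ioo (x := φ^[N + 1] x) hζ0 hnegζ
    (fun y hy ↦ (hright y hy).imp fun _ h ↦ h.2)
    (fun y hy ↦ exists_iterate_mem_Ico_of_quartic hAC hB hC hζ hφ hroot hy)
    (fun y hy ↦ quartic_pos_of_mem_Ioo hB hC hφ hroot hy)
    (fun n ↦ by rw [← Function.iterate_add_apply]; exact hx _)
  rw [← Function.iterate_add_apply] at hn
  exact ⟨n + (N + 1), hn, by omega⟩
end
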